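/- Let n be even, n ≥ 2, and in S_{2n} let ρ be the involution pairing 2k with 2k+1, C_ρ its centralizer, β the 2n-cycle x ↦ x+1 (mod 2n), and r the order-reversing involution x ↦ 2n−1−x. Then for every σ ∈ β·C_ρ and every integer p, one has β^{2p}·σ·β^{−2p} ≠ r·σ·r and β^{2p}·σ·β^{−2p} ≠ β⁻¹·σ⁻¹·β; in other words, no element of U = β·C_ρ is conjugate by a power of β² to its reversal image σ_r = r·σ·r, nor to its swap-mirror image σ_{sm} = β⁻¹·σ⁻¹·β. -/

import Mathlib

/-- The fixed-point-free involution of `Fin (2n)` pairing `2k` with `2k+1`. -/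
def rho (n : ℕ) : Equiv.Perm (Fin (2 * n)) :=
  Function.Involutive.toPerm
    (fun x => ⟨if x.val % 2 = 0 then x.val + 1 else x.val - 1, by
      have := x.isLt; split_ifs with h <;> omega⟩)
    (by
      intro x
      have hx := x.isLt
      apply Fin.ext
      dsimp only
      split_ifs <;> omega)

/-- The order-reversing involution `x ↦ 2n - 1 - x` of `Fin (2n)`. -/
def rev (n : ℕ) : Equiv.Perm (Fin (2 * n)) :=
  Function.Involutive.toPerm
    (fun x => ⟨2 * n - 1 - x.val, by have := x.isLt; omega⟩)
    (by
      intro x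
      have hx := x.isLt
      apply Fin.ext
      dsimp only
      omega)

theorem aux_rot_val (m : ℕ) (x : Fin m) :
    (finRotate m x).val = if x.val + 1 = m then 0 else x.val + 1 := by
  cases m with
  | zero => exact x.elim0
  | succ k =>
    rw [coe_finRotate]
    have h : x = Fin.last k ↔ x.val + 1 = k + 1 := by
      rw [Fin.ext_iff, Fin.val_last]; omega
    simp only [h]

theorem aux_zpow_val (m : ℕ) (z : ℤ) : ∀ x : Fin m,
    ∃ k : ℤ, (((finRotate m ^ z) x).val : ℤ) = x.val + z + m * k := by
  have h1 : ∀ x : Fin m, ∃ k : ℤ, ((finRotate m x).val : ℤ) = x.val + 1 + m * k := by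
    intro x
    rw [aux_rot_val]
    split_ifs with h
    · exact ⟨-1, by omega⟩
    · exact ⟨0, by push_cast; ring⟩
  induction z using Int.induction_on with
  | zero => intro x; exact ⟨0, by simp⟩
  | succ i ih =>
    intro x
    obtain ⟨k, hk⟩ := h1 x
    obtain ⟨l, hl⟩ := ih (finRotate m x)
    refine ⟨k + l, ?_⟩
    rw [zpow_add_one, Equiv.Perm.mul_apply, hl, hk]
    ring
  | pred i ih =>
    intro x
    obtain ⟨k, hk⟩ := h1 ((finRotate m)⁻¹ x)
    obtain ⟨l, hl⟩ := ih ((finRotate m)⁻¹ x)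
    rw [show finRotate m ((finRotate m)⁻¹ x) = x from (finRotate m).apply_symm_apply x] at hk
    refine ⟨l - k, ?_⟩
    rw [zpow_sub_one, Equiv.Perm.mul_apply, hl]
    linear_combination -hk

theorem aux_fin_ext (m : ℕ) (x y : Fin m) (k : ℤ) (h : (x.val : ℤ) = y.val + m * k) :
    x = y := by
  have h2 := (Int.emod_eq_of_lt (a := (x.val : ℤ)) (b := m) (by omega) (by omega))
  have h3 := (Int.emod_eq_of_lt (a := (y.val : ℤ)) (b := m) (by omega) (by omega))
  rw [h, Int.add_mul_emod_self_left, h3] at h2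
  apply Fin.ext
  omega

theorem aux_rho_val (n : ℕ) (x : Fin (2 * n)) :
    (rho n x).val = if x.val % 2 = 0 then x.val + 1 else x.val - 1 := rfl

theorem aux_rev_val (n : ℕ) (x : Fin (2 * n)) :
    (rev n x).val = 2 * n - 1 - x.val := rfl

theorem aux_comm (n : ℕ) (p : ℤ) : Commute (finRotate (2 * n) ^ (2 * p)) (rho n) := by
  rw [zpow_mul]
  apply Commute.zpow_left
  rw [show (finRotate (2 * n) ^ (2 : ℤ)) = finRotate (2 * n) * finRotate (2 * n) from zpow_two _]
  apply Equiv.ext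
  intro x
  apply Fin.ext
  have := x.isLt
  simp only [Equiv.Perm.mul_apply, aux_rho_val, aux_rot_val]
  split_ifs <;> omega

theorem aux_first (n : ℕ) (hn : 2 ≤ n) (heven : Even n)
    (ξ : Equiv.Perm (Fin (2 * n))) (hξ : ∀ x, ξ (rho n x) = rho n (ξ x)) (p : ℤ)
    (H : ∀ x, rev n ((finRotate (2 * n) ^ (2 * p)) (finRotate (2 * n) (ξ x))) =
      finRotate (2 * n) (ξ (rev n ((finRotate (2 * n) ^ (2 * p)) x)))) : False := by
  obtain ⟨a, ha⟩ := heven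
  have hg : ∀ x : Fin (2 * n), ∃ k : ℤ,
      ((rev n ((finRotate (2 * n) ^ (2 * p)) x)).val : ℤ) =
        -1 - 2 * p - x.val + ((2 * n : ℕ) : ℤ) * k := by
    intro x
    obtain ⟨k, hk⟩ := aux_zpow_val (2 * n) (2 * p) x
    refine ⟨1 - k, ?_⟩
    rw [aux_rev_val]
    have := ((finRotate (2 * n) ^ (2 * p)) x).isLt
    have e : ((2 * n - 1 - ((finRotate (2 * n) ^ (2 * p)) x).val : ℕ) : ℤ) =
      ((2 * n : ℕ) : ℤ) - 1 - (((finRotate (2 * n) ^ (2 * p)) x).val : ℤ) := by omega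
    rw [e, hk]; ring
  have h4 : ∀ k : ℤ, ((2 * n : ℕ) : ℤ) * k = 4 * (a * k) := by
    intro k; rw [ha]; push_cast; ring
  obtain ⟨y, k, hy⟩ : ∃ y : Fin (2 * n), ∃ k : ℤ, (y.val : ℤ) = -1 - p + ((2 * n : ℕ) : ℤ) * k := by
    obtain ⟨k, hk⟩ := aux_zpow_val (2 * n) (-1 - p) ⟨0, by omega⟩
    exact ⟨_, k, by rw [hk]; simp⟩
  have hgy : rev n ((finRotate (2 * n) ^ (2 * p)) y) = finRotate (2 * n) y := by
    obtain ⟨l, hl⟩ := hg y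
    obtain ⟨j, hj⟩ := aux_zpow_val (2 * n) 1 y
    rw [zpow_one] at hj
    apply aux_fin_ext _ _ _ (l - j - 2 * k)
    rw [hl, hj]
    linear_combination -2 * hy
  rw [h4] at hy
  rcases Int.even_or_odd' p with ⟨q, hq | hq⟩
  · -- p even, y odd
    set w := (finRotate (2 * n)).symm y with hw
    have hwy : finRotate (2 * n) w = y := (finRotate (2 * n)).apply_symm_apply y
    have hwv := aux_rot_val _ w
    rw [hwy] at hwv
    have hyo : y.val % 2 = 1 := by omega
    have hrw : rho n w = y := by
      apply Fin.ext
      rw [aux_rho_val]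
      split_ifs at hwv ⊢ <;> omega
    have hx := H (ξ.symm w)
    rw [Equiv.apply_symm_apply, hwy, hgy] at hx
    have hx2 := (finRotate (2 * n)).injective hx
    have hx3 : ξ (rho n (ξ.symm w)) = y := by rw [hξ, Equiv.apply_symm_apply, hrw]
    have hx4 := ξ.injective (hx3.trans hx2)
    obtain ⟨l, hl⟩ := hg (ξ.symm w)
    rw [← hx4, h4, aux_rho_val] at hl
    split_ifs at hl <;> omega
  · -- p odd, y even
    have hye : y.val % 2 = 0 := by omega
    have hry : rho n y = finRotate (2 * n) y := by
      apply Fin.ext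
      rw [aux_rho_val, aux_rot_val]
      have := y.isLt
      split_ifs <;> omega
    have hx := H y
    rw [hgy, ← hry, hξ] at hx
    obtain ⟨l, hl⟩ := hg (finRotate (2 * n) (ξ y))
    rw [hx, h4, aux_rot_val, aux_rot_val, aux_rho_val] at hl
    have := (ξ y).isLt
    split_ifs at hl <;> omega

theorem aux_second (n : ℕ) (hn : 2 ≤ n) (heven : Even n)
    (τ : Equiv.Perm (Fin (2 * n))) (hτ : ∀ x, τ (rho n x) = rho n (τ x)) (q : ℤ) (hq : Odd q)
    (H : τ * τ = finRotate (2 * n) ^ (2 * q)) : False := by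
  have hdep : ∀ x y : Fin (2 * n), x.val / 2 = y.val / 2 → (τ x).val / 2 = (τ y).val / 2 := by
    intro x y hxy
    have : x = y ∨ x = rho n y := by
      rw [Fin.ext_iff, Fin.ext_iff, aux_rho_val]
      split_ifs <;> omega
    rcases this with rfl | rfl
    · rfl
    · rw [hτ, aux_rho_val]
      split_ifs <;> omega
  let d : Fin n → Fin (2 * n) := fun k => ⟨2 * k.val, by omega⟩
  let t : Fin n → Fin n := fun k => ⟨(τ (d k)).val / 2, by have := (τ (d k)).isLt; omega⟩
  have htt : ∀ k, t (t k) = (finRotate n ^ q) k := by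
    intro k
    have h1 : (t (t k)).val = (τ (τ (d k))).val / 2 := by
      apply hdep
      simp only [d, t]
      omega
    have h2 : τ (τ (d k)) = (finRotate (2 * n) ^ (2 * q)) (d k) := by
      rw [← H]; rfl
    obtain ⟨u, hu⟩ := aux_zpow_val (2 * n) (2 * q) (d k)
    obtain ⟨v, hv⟩ := aux_zpow_val n q k
    apply aux_fin_ext _ _ _ (u - v)
    rw [h1, h2, hv]
    have h3 : (((finRotate (2 * n) ^ (2 * q)) (d k)).val : ℤ) = 2 * (k.val + q + n * u) := by
      rw [hu]; simp only [d]; push_cast; ring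
    have h5 : k.val + q + n * v + n * (u - v) = k.val + q + n * u := by ring
    rw [h5]
    omega
  have hbij : Function.Bijective t := by
    have : t ∘ t = ⇑(finRotate n ^ q : Equiv.Perm (Fin n)) := funext htt
    have hb : Function.Bijective (t ∘ t) := by rw [this]; exact Equiv.bijective _
    exact ⟨hb.1.of_comp, hb.2.of_comp⟩
  have hE : Equiv.ofBijective t hbij * Equiv.ofBijective t hbij = finRotate n ^ q :=
    Equiv.ext htt
  have hs := congrArg Equiv.Perm.sign hE
  rw [map_mul, Int.units_mul_self, map_zpow] at hs
  obtain ⟨m, rfl⟩ : ∃ m, n = m + 1 := ⟨n - 1, by omega⟩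
  have hm : Odd m := by
    rcases Nat.even_or_odd m with h | h
    · exact absurd heven (by simpa using h.add_one)
    · exact h
  rw [sign_finRotate, Nat.add_sub_cancel, hm.neg_one_pow] at hs
  obtain ⟨c, rfl⟩ := hq
  rw [zpow_add, zpow_mul] at hs
  simp at hs

/-- For n even, no element σ of the coset U = β·C_ρ is conjugate by a power of β² to
its reversal image σ_r = r·σ·r, nor to its swap-mirror image σ_{sm} = β⁻¹·σ⁻¹·β. -/
theorem reversal_swapMirror_never_symmetry_even (n : ℕ) (hn : 2 ≤ n) (heven : Even n)
    (σ : Equiv.Perm (Fin (2 * n)))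
    (hσ : ∃ ξ ∈ Subgroup.centralizer {rho n}, σ = finRotate (2 * n) * ξ) (p : ℤ) :
    finRotate (2 * n) ^ (2 * p) * σ * (finRotate (2 * n) ^ (2 * p))⁻¹
        ≠ rev n * σ * rev n ∧
    finRotate (2 * n) ^ (2 * p) * σ * (finRotate (2 * n) ^ (2 * p))⁻¹
        ≠ (finRotate (2 * n))⁻¹ * σ⁻¹ * finRotate (2 * n) := by
  obtain ⟨ξ, hξ, rfl⟩ := hσ
  rw [Subgroup.mem_centralizer_singleton_iff] at hξ
  have hc : Commute ξ (rho n) := by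
    first | exact hξ | exact hξ.symm
  have hinv : rev n * rev n = 1 := by
    apply Equiv.ext
    intro x
    apply Fin.ext
    have := x.isLt
    simp only [Equiv.Perm.mul_apply, aux_rev_val, Equiv.Perm.one_apply]
    omega
  constructor
  · intro h
    refine aux_first n hn heven ξ (fun x => DFunLike.congr_fun hc.eq x) p ?_
    intro x
    have h2 : rev n * finRotate (2 * n) ^ (2 * p) * (finRotate (2 * n) * ξ) =
        finRotate (2 * n) * ξ * (rev n * finRotate (2 * n) ^ (2 * p)) := by
      have h3 := mul_inv_eq_iff_eq_mul.1 h
      rw [mul_assoc, h3]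
      simp only [← mul_assoc]
      rw [hinv, one_mul]
    exact DFunLike.congr_fun h2 x
  · intro h
    have hcτ : Commute (finRotate (2 * n) ^ (2 * (-p)) * ξ) (rho n) :=
      (aux_comm n (-p)).mul_left hc
    refine aux_second n hn heven (finRotate (2 * n) ^ (2 * (-p)) * ξ) (fun x => DFunLike.congr_fun hcτ.eq x) (-2 * p - 1)
      ⟨-p - 1, by ring⟩ ?_
    have e1 : finRotate (2 * n) ^ (2 * (-p)) = (finRotate (2 * n) ^ (2 * p))⁻¹ := by
      rw [← zpow_neg]; congr 1; ring
    have e2 : finRotate (2 * n) ^ (2 * (-2 * p - 1)) = (finRotate (2 * n) ^ (2 * p))⁻¹ *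
        (finRotate (2 * n))⁻¹ * (finRotate (2 * n))⁻¹ * (finRotate (2 * n) ^ (2 * p))⁻¹ := by
      rw [← zpow_neg, ← zpow_neg_one, ← zpow_add, ← zpow_add, ← zpow_add]; congr 1; ring
    have e3 : finRotate (2 * n) * finRotate (2 * n) ^ (2 * p) =
      finRotate (2 * n) ^ (2 * p) * finRotate (2 * n) := (Commute.refl _).zpow_right _
    rw [e1, e2]
    generalize finRotate (2 * n) ^ (2 * p) = b at *
    generalize finRotate (2 * n) = β at *
    have e4 : b⁻¹ * β⁻¹ = β⁻¹ * b⁻¹ := by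
      rw [← mul_inv_rev, ← mul_inv_rev, e3]
    have h5 : ξ * b⁻¹ = β⁻¹ * (b⁻¹ * (β⁻¹ * ξ⁻¹)) := by
      have h6 : b * (β * (ξ * b⁻¹)) = β⁻¹ * ξ⁻¹ := by
        calc b * (β * (ξ * b⁻¹)) = b * (β * ξ) * b⁻¹ := by group
          _ = β⁻¹ * (β * ξ)⁻¹ * β := h
          _ = β⁻¹ * ξ⁻¹ := by group
      rw [← h6]; group
    calc b⁻¹ * ξ * (b⁻¹ * ξ) = b⁻¹ * (ξ * b⁻¹) * ξ := by group
      _ = b⁻¹ * β⁻¹ * (b⁻¹ * β⁻¹) := by rw [h5]; group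
      _ = b⁻¹ * β⁻¹ * β⁻¹ * b⁻¹ := by
        rw [mul_assoc (b⁻¹ * β⁻¹) β⁻¹ b⁻¹]; exact congrArg (b⁻¹ * β⁻¹ * ·) e4
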